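/- Let 𝔰 ⊂ K̄ be a finite set of even cardinality at least 2 and set d := min{v(a − a′) : a, a′ ∈ 𝔰, a ≠ a′}. Suppose 𝔰 is the disjoint union of nonempty subsets c₁, …, c_N with N ≥ 2, each of even cardinality, such that v(a − a′) = d whenever a ∈ c_i and a′ ∈ c_j with i ≠ j. Let α ∈ 𝔰. Then the minimum of the N + 1 quantities 𝔱^{c₁}(α,d), …, 𝔱^{c_N}(α,d), 𝔱^{𝔰}(α,d) is attained by at least two of them. In particular, if 𝔱^{c_i}(α,d) = 2v(2) for all i, then also 𝔱^{𝔰}(α,d) = 2v(2). -/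

import Mathlib

open Polynomial

/-- The *Gauss valuation* of a polynomial: the minimum of the valuations of its
coefficients (with value `⊤ = +∞` for the zero polynomial). -/
noncomputable def gaussVal {Kbar : Type*} [Field Kbar]
    (v : AddValuation Kbar (WithTop ℚ)) (h : Kbar[X]) : WithTop ℚ :=
  h.support.inf fun i => v (h.coeff i)

/-- `h = q² + ρ` is a *part-square decomposition* of `h`:
`deg q ≤ ⌈deg h / 2⌉`, encoded as `2 * deg q ≤ deg h + 1` (`q = 0` is allowed). -/
def IsPSD {Kbar : Type*} [Field Kbar] (h q ρ : Kbar[X]) : Prop :=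
  h = q ^ 2 + ρ ∧ 2 * q.natDegree ≤ h.natDegree + 1

/-- A part-square decomposition `h = q² + ρ` is *good* if either `v ρ − v h ≥ 2 v 2`,
or `v ρ − v h < 2 v 2` and no part-square decomposition of `h` has strictly larger
Gauss valuation of its remainder. -/
def IsGoodPSD {Kbar : Type*} [Field Kbar] (v : AddValuation Kbar (WithTop ℚ))
    (h q ρ : Kbar[X]) : Prop :=
  IsPSD h q ρ ∧
    (gaussVal v h + (v 2 + v 2) ≤ gaussVal v ρ ∨
      (gaussVal v ρ < gaussVal v h + (v 2 + v 2) ∧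
        ∀ q' ρ' : Kbar[X], IsPSD h q' ρ' → gaussVal v ρ' ≤ gaussVal v ρ))

/-- The residue field of `v` is algebraically closed, encoded via integral lifts:
every monic polynomial of positive degree with integral coefficients has an integral
root modulo the maximal ideal. -/
def ResidueAlgClosed {Kbar : Type*} [Field Kbar]
    (v : AddValuation Kbar (WithTop ℚ)) : Prop :=
  ∀ p : Kbar[X], p.Monic → 0 < p.natDegree → (∀ i, 0 ≤ v (p.coeff i)) →
    ∃ x : Kbar, 0 ≤ v x ∧ 0 < v (p.eval x)

/-- The monic polynomial `h_S := ∏_{a ∈ S} (z − a)` attached to a finite multiset `S`. -/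
noncomputable def rootsPoly {Kbar : Type*} [Field Kbar] (S : Multiset Kbar) : Kbar[X] :=
  (S.map fun a => X - C a).prod

/-- `TVal v S α b t` expresses that `𝔱^S(α, b) = t`, i.e. (for some, equivalently any,
`β ∈ K̄ˣ` with `v β = b`) that
`t = min (2v(2), sup { v ρ − v (h_S(βz+α)) : h_S(βz+α) = q² + ρ part-square dec. })`;
the subtraction is avoided by adding `v (h_S(βz+α))` throughout and the truncated
supremum is expressed via `IsLUB`. -/
def TVal {Kbar : Type*} [Field Kbar] (v : AddValuation Kbar (WithTop ℚ))
    (S : Multiset Kbar) (α : Kbar) (b t : ℚ) : Prop :=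
  ∃ β : Kbar, β ≠ 0 ∧ v β = (b : WithTop ℚ) ∧
    IsLUB {u : WithTop ℚ |
        ∃ q ρ : Kbar[X], IsPSD ((rootsPoly S).comp (C β * X + C α)) q ρ ∧
          u = min (gaussVal v ((rootsPoly S).comp (C β * X + C α)) + (v 2 + v 2))
                (gaussVal v ρ)}
      (gaussVal v ((rootsPoly S).comp (C β * X + C α)) + (t : WithTop ℚ))

/-!
Write `h_i` for `h_{c_i}(β * z + α)` with `v β = d`. Since `v (α - a) ≥ d` for every root `a`, the
leading coefficient of `h_i` attains its Gauss valuation. Call a polynomial a square up to `c` if it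
has a part-square decomposition whose remainder has relative valuation greater than `c`. Being a
square up to `c ≥ 0` passes to products of polynomials of even degree, so the value of `𝔱` for
the product is at least the minimum of the `𝔱^{c_i}`. For `c < 2v(2)`, polynomials whose leading
coefficient attains the Gauss valuation can also be cancelled: if `p² ≈ g` and `q² ≈ f * g`, then
`q = p * s + u` with `deg u < deg p` gives `p² * (f - s²) ≈ u² + 2 * p * s * u`, and comparing
valuations yields `s² ≈ f`. Hence if the minimum of the `𝔱^{c_i}` is attained only once, then the
product has the same value of `𝔱`.
-/

section

variable {K : Type*} [Field K] {v : AddValuation K (WithTop ℚ)}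

section GaussValuation

lemma le_gaussVal_iff {x : WithTop ℚ} {f : K[X]} :
    x ≤ gaussVal v f ↔ ∀ i, x ≤ v (f.coeff i) := by
  refine Finset.le_inf_iff.trans ⟨fun h i ↦ ?_, fun h i _ ↦ h i⟩
  by_cases hi : f.coeff i = 0
  · simp [hi]
  · exact h i (mem_support_iff.2 hi)

lemma gaussVal_le (f : K[X]) (i : ℕ) : gaussVal v f ≤ v (f.coeff i) :=
  le_gaussVal_iff.1 le_rfl i

@[simp]
lemma gaussVal_zero : gaussVal v 0 = ⊤ := by
  rw [gaussVal, support_zero, Finset.inf_empty]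

lemma gaussVal_C (a : K) : gaussVal v (C a) = v a := by
  refine le_antisymm ((gaussVal_le _ 0).trans_eq (by rw [coeff_C_zero])) ?_
  refine le_gaussVal_iff.2 fun i ↦ ?_
  rcases eq_or_ne i 0 with rfl | hi
  · rw [coeff_C_zero]
  · rw [coeff_C_of_ne_zero hi, v.map_zero]
    exact le_top

lemma gaussVal_one : gaussVal v 1 = 0 := by
  rw [← C_1, gaussVal_C, v.map_one]

lemma gaussVal_ne_top {f : K[X]} (hf : f ≠ 0) : gaussVal v f ≠ ⊤ := fun h ↦
  hf <| leadingCoeff_eq_zero.1 <| v.top_iff.1 <| top_le_iff.1 <| h ▸ gaussVal_le f _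

variable (v) in
/-- `i` is the largest index whose coefficient attains the Gauss valuation of `f`, i.e. the degree
of the reduction of `f` once `f` has been scaled to Gauss valuation `0`. -/
def IsReductionDegree (f : K[X]) (i : ℕ) : Prop :=
  v (f.coeff i) = gaussVal v f ∧ ∀ j, i < j → gaussVal v f < v (f.coeff j)

lemma exists_isReductionDegree {f : K[X]} (hf : f ≠ 0) : ∃ i, IsReductionDegree v f i := by
  let s := {i ∈ f.support | v (f.coeff i) = gaussVal v f}
  have mem_s (i : ℕ) : i ∈ s ↔ v (f.coeff i) = gaussVal v f := by
    refine Finset.mem_filter.trans (and_iff_right_of_imp fun h ↦ mem_support_iff.2 ?_)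
    exact v.ne_top_iff.1 (h ▸ gaussVal_ne_top hf)
  obtain ⟨i, -, hi⟩ := Finset.exists_mem_eq_inf f.support (support_nonempty.2 hf)
    fun i ↦ v (f.coeff i)
  have hs : s.Nonempty := ⟨i, (mem_s i).2 hi.symm⟩
  refine ⟨s.max' hs, (mem_s _).1 (s.max'_mem hs), fun j hj ↦ ?_⟩
  exact (gaussVal_le f j).lt_of_ne fun h ↦ (s.le_max' j ((mem_s j).2 h.symm)).not_gt hj

lemma add_gaussVal_le_val_coeff_mul (f g : K[X]) (i : ℕ) :
    gaussVal v f + gaussVal v g ≤ v ((f * g).coeff i) := by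
  rw [coeff_mul]
  refine v.map_le_sum fun x _ ↦ ?_
  rw [v.map_mul]
  exact add_le_add (gaussVal_le f _) (gaussVal_le g _)

lemma IsReductionDegree.ne_zero {f : K[X]} {i : ℕ} (hf : IsReductionDegree v f i) : f ≠ 0 := by
  rintro rfl
  simpa using hf.2 (i + 1) i.lt_succ_self

lemma IsReductionDegree.val_coeff_mul {f g : K[X]} {i j : ℕ} (hf : IsReductionDegree v f i)
    (hg : IsReductionDegree v g j) :
    v ((f * g).coeff (i + j)) = gaussVal v f + gaussVal v g := by
  have hf_top := gaussVal_ne_top (v := v) hf.ne_zero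
  have hg_top := gaussVal_ne_top (v := v) hg.ne_zero
  have hmain : v (f.coeff i * g.coeff j) = gaussVal v f + gaussVal v g := by
    rw [v.map_mul, hf.1, hg.1]
  rw [coeff_mul, ← Finset.add_sum_erase _ _ (a := (i, j)) (by simp), v.map_add_eq_of_lt_left, hmain]
  rw [hmain]
  refine v.map_lt_sum (WithTop.add_ne_top.2 ⟨hf_top, hg_top⟩) fun ⟨k, l⟩ hkl ↦ ?_
  simp only [Finset.mem_erase, Finset.HasAntidiagonal.mem_antidiagonal, ne_eq, Prod.mk.injEq] at hkl
  rw [v.map_mul]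
  rcases lt_or_ge i k with hk | hk
  · exact WithTop.add_lt_add_of_lt_of_le hg_top (hf.2 k hk) (gaussVal_le g l)
  · exact WithTop.add_lt_add_of_le_of_lt hf_top (gaussVal_le f k) (hg.2 l (by lia))

lemma gaussVal_mul (f g : K[X]) : gaussVal v (f * g) = gaussVal v f + gaussVal v g := by
  refine le_antisymm ?_ (le_gaussVal_iff.2 (add_gaussVal_le_val_coeff_mul f g))
  rcases eq_or_ne f 0 with rfl | hf
  · simp
  rcases eq_or_ne g 0 with rfl | hg
  · simp
  obtain ⟨i, hi⟩ := exists_isReductionDegree (v := v) hf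
  obtain ⟨j, hj⟩ := exists_isReductionDegree (v := v) hg
  exact (gaussVal_le _ _).trans_eq (hi.val_coeff_mul hj)

variable (v) in
/-- The Gauss valuation `gaussVal v`, bundled as a valuation on the polynomial ring so that the
general theory of valuations applies to it. -/
noncomputable def gaussValuation : AddValuation K[X] (WithTop ℚ) :=
  .of (gaussVal v) gaussVal_zero gaussVal_one
    (fun f g ↦ le_gaussVal_iff.2 fun i ↦ by
      rw [coeff_add]
      exact (min_le_min (gaussVal_le f i) (gaussVal_le g i)).trans (v.map_add _ _))
    gaussVal_mul

lemma gaussVal_pow (f : K[X]) (n : ℕ) : gaussVal v (f ^ n) = n • gaussVal v f :=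
  (gaussValuation v).map_pow f n

lemma gaussVal_comp_C_mul_X {u : K} (hu : v u = 0) (f : K[X]) :
    gaussVal v (f.comp (C u * X)) = gaussVal v f := by
  refine eq_of_forall_le_iff fun x ↦ ?_
  simp only [le_gaussVal_iff, comp_C_mul_X_coeff, v.map_mul, v.map_pow, hu, smul_zero, add_zero]

end GaussValuation

section DominantLeadingCoeff

variable (v) in
/-- The multiplicative monoid of nonzero polynomials whose leading coefficient attains the Gauss
valuation, i.e. whose degree does not drop under reduction. -/
def dominantLeadingCoeff : Submonoid K[X] where
  carrier := {f | f ≠ 0 ∧ v f.leadingCoeff = gaussVal v f}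
  one_mem' := ⟨one_ne_zero, by
    rw [leadingCoeff_one, v.map_one]
    exact gaussVal_one.symm⟩
  mul_mem' := fun hf hg ↦ ⟨mul_ne_zero hf.1 hg.1, by
    rw [leadingCoeff_mul, v.map_mul, hf.2, hg.2, gaussVal_mul]⟩

lemma isReductionDegree_natDegree {f : K[X]} (hf : f ∈ dominantLeadingCoeff v) :
    IsReductionDegree v f f.natDegree := by
  refine ⟨hf.2, fun j hj ↦ ?_⟩
  rw [coeff_eq_zero_of_natDegree_lt hj, v.map_zero]
  exact (gaussVal_ne_top hf.1).lt_top

lemma C_mul_X_add_C_mem_dominantLeadingCoeff {a b : K} (ha : a ≠ 0) (hab : v a ≤ v b) :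
    C a * X + C b ∈ dominantLeadingCoeff v := by
  refine ⟨fun h ↦ ha (by simpa using congrArg (coeff · 1) h), ?_⟩
  rw [leadingCoeff_linear ha]
  refine le_antisymm (le_gaussVal_iff.2 fun i ↦ ?_) ?_
  · match i with
    | 0 => simpa using hab
    | 1 => simp
    | i + 2 => simp
  · calc gaussVal v (C a * X + C b) ≤ v ((C a * X + C b).coeff 1) := gaussVal_le _ 1
      _ = v a := by
        rw [coeff_add, coeff_C_mul, coeff_X_one, mul_one, coeff_C_of_ne_zero one_ne_zero, add_zero]

/-- Division by a polynomial that keeps its degree under reduction loses no precision. -/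
lemma gaussVal_mul_add_of_degree_lt {p s u : K[X]} (hp : p ∈ dominantLeadingCoeff v)
    (hu : u.degree < p.degree) :
    gaussVal v (p * s + u) = min (gaussVal v (p * s)) (gaussVal v u) := by
  have hquot : gaussVal v (p * s + u) ≤ gaussVal v (p * s) := by
    rcases eq_or_ne s 0 with rfl | hs
    · simp
    obtain ⟨k, hk⟩ := exists_isReductionDegree (v := v) hs
    have hu_coeff : u.coeff (p.natDegree + k) = 0 :=
      coeff_eq_zero_of_degree_lt <| hu.trans_le <| degree_le_natDegree.trans <| by
        exact_mod_cast Nat.le_add_right _ k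
    calc gaussVal v (p * s + u) ≤ v ((p * s + u).coeff (p.natDegree + k)) := gaussVal_le _ _
      _ = gaussVal v (p * s) := by
        rw [coeff_add, hu_coeff, add_zero, (isReductionDegree_natDegree hp).val_coeff_mul hk,
          gaussVal_mul]
  refine le_antisymm (le_min hquot ?_) ((gaussValuation v).map_add _ _)
  calc gaussVal v (p * s + u) ≤ gaussVal v (p * s + u - p * s) :=
        (gaussValuation v).map_le_sub le_rfl hquot
    _ = gaussVal v u := by rw [add_sub_cancel_left]

end DominantLeadingCoeff

section IsSquareUpTo

variable (v) in
/-- `f` is a square up to relative precision `c`: it has a part-square decomposition whose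
remainder has Gauss valuation exceeding that of `f` by more than `c`. -/
def IsSquareUpTo (f : K[X]) (c : ℚ) : Prop :=
  ∃ q ρ, IsPSD f q ρ ∧ gaussVal v f + c < gaussVal v ρ

lemma IsSquareUpTo.ne_zero {f : K[X]} {c : ℚ} (hf : IsSquareUpTo v f c) : f ≠ 0 := by
  rintro rfl
  obtain ⟨q, ρ, -, hρ⟩ := hf
  simp at hρ

lemma isSquareUpTo_of_neg {f : K[X]} {c : ℚ} (hf : f ≠ 0) (hc : c < 0) : IsSquareUpTo v f c := by
  refine ⟨0, f, ⟨by ring, by simp⟩, ?_⟩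
  calc gaussVal v f + c < gaussVal v f + 0 :=
        WithTop.add_lt_add_left (gaussVal_ne_top hf) (by exact_mod_cast hc)
    _ = gaussVal v f := add_zero _

lemma IsSquareUpTo.comp_C_mul_X {f : K[X]} {c : ℚ} {u : K} (hu : v u = 0)
    (hf : IsSquareUpTo v f c) : IsSquareUpTo v (f.comp (C u * X)) c := by
  have hu0 : u ≠ 0 := v.ne_top_iff.1 (hu ▸ WithTop.zero_ne_top)
  obtain ⟨q, ρ, ⟨hsum, hdeg⟩, hρ⟩ := hf
  refine ⟨q.comp (C u * X), ρ.comp (C u * X), ⟨?_, ?_⟩, ?_⟩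
  · rw [hsum, add_comp, pow_comp]
  · simpa only [natDegree_comp, natDegree_C_mul_X u hu0, mul_one] using hdeg
  · simpa only [gaussVal_comp_C_mul_X hu] using hρ

lemma isSquareUpTo_comp_C_mul_X_iff {f : K[X]} {c : ℚ} {u : K} (hu : v u = 0) :
    IsSquareUpTo v (f.comp (C u * X)) c ↔ IsSquareUpTo v f c := by
  refine ⟨fun h ↦ ?_, .comp_C_mul_X hu⟩
  have hu0 : u ≠ 0 := v.ne_top_iff.1 (hu ▸ WithTop.zero_ne_top)
  have huinv : v u⁻¹ = 0 := by rw [v.map_inv, hu, neg_zero]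
  have hcancel : (C u * X).comp (C u⁻¹ * X) = (X : K[X]) := by
    rw [mul_comp, C_comp, X_comp, ← mul_assoc, ← C_mul, mul_inv_cancel₀ hu0, C_1, one_mul]
  simpa only [comp_assoc, hcancel, comp_X] using h.comp_C_mul_X huinv

lemma IsPSD.two_nsmul_gaussVal {f q ρ : K[X]} (h : IsPSD f q ρ)
    (hρ : gaussVal v f < gaussVal v ρ) : 2 • gaussVal v q = gaussVal v f := by
  have hq : q ^ 2 = f - ρ := by rw [h.1, add_sub_cancel_right]
  calc 2 • gaussVal v q = gaussVal v (q ^ 2) := (gaussVal_pow q 2).symm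
    _ = gaussVal v (f - ρ) := by rw [hq]
    _ = gaussVal v f := (gaussValuation v).map_sub_eq_of_lt_left hρ

lemma IsPSD.mem_dominantLeadingCoeff {f q ρ : K[X]} (h : IsPSD f q ρ)
    (hf : f ∈ dominantLeadingCoeff v) (heven : Even f.natDegree)
    (hρ : gaussVal v f < gaussVal v ρ) :
    q ∈ dominantLeadingCoeff v ∧ 2 * q.natDegree = f.natDegree := by
  obtain ⟨n, hn⟩ := heven
  have hq_deg : q.natDegree ≤ n := by have := h.2; lia
  have hsq_coeff : q.coeff n ^ 2 = f.leadingCoeff - ρ.coeff f.natDegree := by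
    rw [← coeff_pow_of_natDegree_le hq_deg, leadingCoeff, ← coeff_sub, hn, ← two_mul, mul_comm]
    exact congrArg (coeff · _) (eq_sub_of_add_eq h.1.symm)
  have htwo : 2 • v (q.coeff n) = 2 • gaussVal v q := by
    rw [h.two_nsmul_gaussVal hρ, ← v.map_pow, hsq_coeff, v.map_sub_eq_of_lt_left, hf.2]
    exact hf.2 ▸ hρ.trans_le (gaussVal_le ρ _)
  have hlead : v (q.coeff n) = gaussVal v q := by
    refine ((gaussVal_le q n).eq_of_not_lt fun hlt ↦ (WithTop.add_lt_add hlt hlt).ne ?_).symm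
    simpa only [two_nsmul] using htwo.symm
  have hq : q ≠ 0 := by
    rintro rfl
    refine gaussVal_ne_top (v := v) hf.1 ((h.two_nsmul_gaussVal hρ).symm.trans ?_)
    rw [gaussVal_zero, two_nsmul, top_add]
  have hdeg : q.natDegree = n := hq_deg.antisymm <| le_natDegree_of_ne_zero <|
    v.ne_top_iff.1 (hlead ▸ gaussVal_ne_top hq)
  exact ⟨⟨hq, by rw [leadingCoeff, hdeg, hlead]⟩, by lia⟩

lemma gaussVal_lt_of_add_coe_lt {f g : K[X]} {c : ℚ} (hc : 0 ≤ c)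
    (h : gaussVal v f + c < gaussVal v g) : gaussVal v f < gaussVal v g :=
  (le_add_of_nonneg_right (by exact_mod_cast hc)).trans_lt h

lemma gaussVal_mul_add_coe_lt {f g h : K[X]} {c : ℚ} (hf : f ≠ 0)
    (hgh : gaussVal v g + c < gaussVal v h) :
    gaussVal v (f * g) + c < gaussVal v (f * h) := by
  rw [gaussVal_mul, gaussVal_mul, add_assoc]
  exact WithTop.add_lt_add_left (gaussVal_ne_top hf) hgh

lemma natDegree_mul_add_of_degree_lt {p s u : K[X]} (hs : s ≠ 0) (hu : u.degree < p.degree) :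
    (p * s + u).natDegree = p.natDegree + s.natDegree := by
  have hp : p ≠ 0 := ne_zero_of_degree_gt hu
  rw [natDegree_add_eq_left_of_degree_lt (hu.trans_le (degree_le_mul_left p hs)),
    natDegree_mul hp hs]

lemma IsSquareUpTo.mul {f g : K[X]} {c : ℚ} (hc : 0 ≤ c) (hge : Even g.natDegree)
    (hf : IsSquareUpTo v f c) (hg : IsSquareUpTo v g c) :
    IsSquareUpTo v (f * g) c := by
  have hf0 := hf.ne_zero
  have hg0 := hg.ne_zero
  have hdeg_fg := natDegree_mul hf0 hg0
  obtain ⟨q, ρ, hq, hρ⟩ := hf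
  obtain ⟨p, τ, hp, hτ⟩ := hg
  refine ⟨q * p, q ^ 2 * τ + g * ρ, ⟨?_, ?_⟩, (gaussValuation v).map_lt_add ?_ ?_⟩
  · linear_combination g * hq.1 + q ^ 2 * hp.1
  · have := natDegree_mul_le (p := q) (q := p)
    have := hq.2
    have := hp.2
    grind
  · calc gaussVal v (f * g) + c < gaussVal v (f * τ) := gaussVal_mul_add_coe_lt hf0 hτ
      _ = gaussVal v (q ^ 2 * τ) := by
        rw [gaussVal_mul, gaussVal_mul, gaussVal_pow,
          hq.two_nsmul_gaussVal (gaussVal_lt_of_add_coe_lt hc hρ)]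
  · exact mul_comm f g ▸ gaussVal_mul_add_coe_lt hg0 hρ

lemma isSquareUpTo_one (c : ℚ) : IsSquareUpTo v 1 c := by
  refine ⟨1, 0, ⟨by ring, by simp⟩, ?_⟩
  rw [gaussVal_one, gaussVal_zero, zero_add]
  exact WithTop.coe_lt_top c

lemma IsSquareUpTo.prod {ι : Type*} {s : Finset ι} {F : ι → K[X]} {c : ℚ} (hc : 0 ≤ c)
    (heven : ∀ i ∈ s, Even (F i).natDegree) (hF : ∀ i ∈ s, IsSquareUpTo v (F i) c) :
    IsSquareUpTo v (∏ i ∈ s, F i) c := by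
  refine (Finset.prod_induction F (fun f ↦ Even f.natDegree ∧ IsSquareUpTo v f c) ?_ ?_
    fun i hi ↦ ⟨heven i hi, hF i hi⟩).2
  · rintro f g ⟨hfe, hf⟩ ⟨hge, hg⟩
    refine ⟨?_, hf.mul hc hge hg⟩
    rw [natDegree_mul hf.ne_zero hg.ne_zero]
    exact hfe.add hge
  · exact ⟨by simp, isSquareUpTo_one c⟩

lemma add_coe_lt_of_min_le_min {A V a b m e : WithTop ℚ} {c : ℚ} (hA : A ≠ ⊤) (hc : c < V + V)
    (ha : A ≤ 2 • a) (he : A + c < e) (h : min (V + a + b) e ≤ min m (2 • b)) :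
    A + c < m := by
  -- If the left-hand minimum is `V + a + b`, then `V + a ≤ b`, so `V + V + 2 • a ≤ m`.
  by_contra! hm
  lift A to ℚ using hA
  lift m to ℚ using (hm.trans_lt (WithTop.coe_lt_top (A + c))).ne
  have hlin : V + a + b ≤ min (m : WithTop ℚ) (2 • b) :=
    (min_le_iff.1 h).resolve_right fun hem ↦
      (he.trans_le hem).not_ge ((min_le_left _ _).trans hm)
  rw [le_min_iff] at hlin
  have hfin : V + a + b ≠ ⊤ := (hlin.1.trans_lt (WithTop.coe_lt_top m)).ne
  simp only [WithTop.add_ne_top] at hfin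
  lift V to ℚ using hfin.1.1
  lift a to ℚ using hfin.1.2
  lift b to ℚ using hfin.2
  simp only [two_nsmul] at ha hlin
  norm_cast at hc ha hm hlin
  linarith

/-- The key computation: `p² * (f - s²) - u² = 2 * p * s * u + (ρ - f * τ)`, whose left-hand side
is a division with remainder by `p²`. -/
lemma min_le_gaussVal_sq_mul_sub_sq {f g p s u ρ τ : K[X]} (hp : p ∈ dominantLeadingCoeff v)
    (hu : u.degree < p.degree) (hg : g = p ^ 2 + τ) (hfg : f * g = (p * s + u) ^ 2 + ρ) :
    min (v 2 + gaussVal v (p * s) + gaussVal v u) (gaussVal v (ρ - f * τ)) ≤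
      min (gaussVal v (p ^ 2 * (f - s ^ 2))) (2 • gaussVal v u) := by
  have hu_sq : (-(u ^ 2)).degree < (p ^ 2).degree := by
    rw [degree_neg, degree_pow, degree_pow, two_nsmul, two_nsmul]
    exact (add_le_add_right hu.le _).trans_lt (WithBot.add_lt_add_right (ne_bot_of_gt hu) hu)
  calc min (v 2 + gaussVal v (p * s) + gaussVal v u) (gaussVal v (ρ - f * τ))
    _ = min (gaussVal v (C 2 * (p * s) * u)) (gaussVal v (ρ - f * τ)) := by
      rw [gaussVal_mul (C 2 * (p * s)), gaussVal_mul (C 2), gaussVal_C]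
    _ ≤ gaussVal v (C 2 * (p * s) * u + (ρ - f * τ)) := (gaussValuation v).map_add _ _
    _ = gaussVal v (p ^ 2 * (f - s ^ 2) + -(u ^ 2)) := by
      rw [C_ofNat]
      congr 1
      linear_combination f * hg - hfg
    _ = min (gaussVal v (p ^ 2 * (f - s ^ 2))) (gaussVal v (-(u ^ 2))) :=
      gaussVal_mul_add_of_degree_lt (pow_mem hp 2) hu_sq
    _ = min (gaussVal v (p ^ 2 * (f - s ^ 2))) (2 • gaussVal v u) := by
      rw [← gaussVal_pow]
      exact congrArg (min _) ((gaussValuation v).map_neg _)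

lemma IsSquareUpTo.of_mul_right {f g : K[X]} {c : ℚ} (hc : 0 ≤ c) (hc2 : c < v 2 + v 2)
    (hg_dom : g ∈ dominantLeadingCoeff v) (hge : Even g.natDegree)
    (hg : IsSquareUpTo v g c) (hfg : IsSquareUpTo v (f * g) c) : IsSquareUpTo v f c := by
  have hf0 := left_ne_zero_of_mul hfg.ne_zero
  have hfg_deg := natDegree_mul hf0 hg.ne_zero
  have hfg_top := gaussVal_ne_top (v := v) hfg.ne_zero
  obtain ⟨p, τ, hp, hτ⟩ := hg
  obtain ⟨q, ρ, hq, hρ⟩ := hfg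
  have hτ_lt := gaussVal_lt_of_add_coe_lt hc hτ
  obtain ⟨hp_dom, hp_deg⟩ := hp.mem_dominantLeadingCoeff hg_dom hge hτ_lt
  obtain ⟨s, u, rfl, hu⟩ : ∃ s u, q = p * s + u ∧ u.degree < p.degree :=
    ⟨q / p, q % p, (EuclideanDomain.div_add_mod q p).symm, degree_mod_lt q hp_dom.1⟩
  have hs_deg : 2 * s.natDegree ≤ f.natDegree + 1 := by
    rcases eq_or_ne s 0 with rfl | hs
    · simp
    have := natDegree_mul_add_of_degree_lt hs hu
    have := hq.2
    lia
  have hps : gaussVal v (f * g) ≤ 2 • gaussVal v (p * s) := by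
    rw [← hq.two_nsmul_gaussVal (gaussVal_lt_of_add_coe_lt hc hρ),
      gaussVal_mul_add_of_degree_lt hp_dom hu]
    exact nsmul_le_nsmul_right (min_le_left _ _) 2
  have hrem : gaussVal v (f * g) + c < gaussVal v (ρ - f * τ) :=
    (lt_min hρ (gaussVal_mul_add_coe_lt hf0 hτ)).trans_le ((gaussValuation v).map_sub _ _)
  have hmain : gaussVal v (f * g) + c < gaussVal v (p ^ 2 * (f - s ^ 2)) :=
    add_coe_lt_of_min_le_min hfg_top hc2 hps hrem
      (min_le_gaussVal_sq_mul_sub_sq hp_dom hu hp.1 hq.1)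
  refine ⟨s, f - s ^ 2, ⟨by ring, hs_deg⟩, lt_of_add_lt_add_left (a := gaussVal v g) ?_⟩
  calc gaussVal v g + (gaussVal v f + c) = gaussVal v (f * g) + c := by
        rw [gaussVal_mul, ← add_assoc, add_comm (gaussVal v g)]
    _ < gaussVal v (p ^ 2 * (f - s ^ 2)) := hmain
    _ = gaussVal v g + gaussVal v (f - s ^ 2) := by
      rw [gaussVal_mul, gaussVal_pow, hp.two_nsmul_gaussVal hτ_lt]

end IsSquareUpTo

section PartSquareDefect

variable (v) in
/-- `t` is the part-square defect of `f`, the minimum of `2 * v 2` and the supremum of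
`v ρ - v f` over the part-square decompositions `f = q² + ρ`. The supremum is described by the
rationals below it, so that no infinite values have to be subtracted. -/
def IsPartSquareDefect (f : K[X]) (t : ℚ) : Prop :=
  ∀ c : ℚ, c < t ↔ (c : WithTop ℚ) < v 2 + v 2 ∧ IsSquareUpTo v f c

lemma isPartSquareDefect_of_isLUB {f : K[X]} {t : ℚ} (hf : f ≠ 0)
    (h : IsLUB {x : WithTop ℚ | ∃ q ρ, IsPSD f q ρ ∧
      x = min (gaussVal v f + (v 2 + v 2)) (gaussVal v ρ)} (gaussVal v f + t)) :
    IsPartSquareDefect v f t := by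
  have htop := gaussVal_ne_top (v := v) hf
  intro c
  calc c < t ↔ gaussVal v f + c < gaussVal v f + t := by
        rw [WithTop.add_lt_add_iff_left htop, WithTop.coe_lt_coe]
    _ ↔ ∃ q ρ, IsPSD f q ρ ∧
          gaussVal v f + c < min (gaussVal v f + (v 2 + v 2)) (gaussVal v ρ) := by
      rw [lt_isLUB_iff h]
      simp only [Set.mem_ofPred_eq]
      grind
    _ ↔ (c : WithTop ℚ) < v 2 + v 2 ∧ IsSquareUpTo v f c := by
      simp only [lt_min_iff, WithTop.add_lt_add_iff_left htop, IsSquareUpTo]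
      tauto

lemma IsPartSquareDefect.le_val_two_add_val_two {f : K[X]} {t : ℚ} (ht : IsPartSquareDefect v f t) :
    (t : WithTop ℚ) ≤ v 2 + v 2 := by
  by_contra! hlt
  lift v 2 + v 2 to ℚ using (hlt.trans (WithTop.coe_lt_top t)).ne with x hx
  have := ((ht x).1 (by exact_mod_cast hlt)).1
  rw [← hx] at this
  exact this.false

lemma zero_le_val_two : 0 ≤ v 2 := by
  rw [← one_add_one_eq_two]
  exact v.map_le_add v.map_one.ge v.map_one.ge

lemma IsPartSquareDefect.nonneg {f : K[X]} {t : ℚ} (hf : f ≠ 0) (ht : IsPartSquareDefect v f t) :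
    0 ≤ t := by
  by_contra! h0
  refine lt_irrefl t ((ht t).2 ⟨?_, isSquareUpTo_of_neg hf h0⟩)
  calc (t : WithTop ℚ) < 0 := by exact_mod_cast h0
    _ ≤ v 2 + v 2 := add_nonneg zero_le_val_two zero_le_val_two

variable {ι : Type*} [Fintype ι] {F : ι → K[X]} {t m : ℚ} {ts : ι → ℚ}

lemma IsPartSquareDefect.le_prod [Nonempty ι] (heven : ∀ i, Even (F i).natDegree)
    (hF : ∀ i, F i ≠ 0) (ht : IsPartSquareDefect v (∏ i, F i) t)
    (hts : ∀ i, IsPartSquareDefect v (F i) (ts i)) (hm : ∀ i, m ≤ ts i) : m ≤ t := by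
  refine le_of_forall_lt fun c hcm ↦ ?_
  rcases lt_or_ge c 0 with hc | hc
  · exact hc.trans_le (ht.nonneg (Finset.prod_ne_zero_iff.2 fun i _ ↦ hF i))
  have hlt (i : ι) := (hts i c).1 (hcm.trans_le (hm i))
  exact (ht c).2 ⟨(hlt (Classical.arbitrary ι)).1, .prod hc (fun i _ ↦ heven i) fun i _ ↦ (hlt i).2⟩

/-- Were `F i` the only factor with defect at most `ts i < t`, both the product of the other factors
and the whole product would be squares up to `ts i`; by cancellation so would `F i`. -/
lemma IsPartSquareDefect.exists_ne_le_of_lt_prod (heven : ∀ i, Even (F i).natDegree)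
    (hF : ∀ i, F i ∈ dominantLeadingCoeff v) (ht : IsPartSquareDefect v (∏ i, F i) t)
    (hts : ∀ i, IsPartSquareDefect v (F i) (ts i)) {i : ι} (hi : ts i < t) :
    ∃ j, j ≠ i ∧ ts j ≤ ts i := by
  classical
  by_contra! hlt
  have hc := (hts i).nonneg (hF i).1
  have hrest : IsSquareUpTo v (∏ j ∈ Finset.univ.erase i, F j) (ts i) :=
    .prod hc (fun j _ ↦ heven j) fun j hj ↦ ((hts j _).1 (hlt j (Finset.ne_of_mem_erase hj))).2
  have hrest_even : Even (∏ j ∈ Finset.univ.erase i, F j).natDegree := by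
    rw [natDegree_prod _ _ fun j _ ↦ (hF j).1]
    exact Finset.even_sum _ fun j _ ↦ heven j
  obtain ⟨hc_two, hprod⟩ := (ht _).1 hi
  rw [← Finset.mul_prod_erase _ F (Finset.mem_univ i)] at hprod
  have hFi := hrest.of_mul_right hc hc_two (prod_mem fun j _ ↦ hF j) hrest_even hprod
  exact lt_irrefl _ ((hts i _).2 ⟨hc_two, hFi⟩)

theorem IsPartSquareDefect.min_attained_twice [Nonempty ι] (heven : ∀ i, Even (F i).natDegree)
    (hF : ∀ i, F i ∈ dominantLeadingCoeff v) (ht : IsPartSquareDefect v (∏ i, F i) t)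
    (hts : ∀ i, IsPartSquareDefect v (F i) (ts i)) :
    ∃ i, ts i ≤ t ∧ (∀ j, ts i ≤ ts j) ∧ (ts i = t ∨ ∃ j, j ≠ i ∧ ts j = ts i) := by
  obtain ⟨i, hi⟩ := Finite.exists_min ts
  have hit : ts i ≤ t := ht.le_prod heven (fun j ↦ (hF j).1) hts hi
  refine ⟨i, hit, hi, hit.eq_or_lt.imp_right fun hlt ↦ ?_⟩
  obtain ⟨j, hji, hj⟩ := ht.exists_ne_le_of_lt_prod heven hF hts hlt
  exact ⟨j, hji, hj.antisymm (hi j)⟩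

end PartSquareDefect

section DiscPoly

/-- The polynomial `h_S(β * z + α)`, i.e. `h_S` in the coordinate of the disc with centre `α` and
depth `v β`. -/
noncomputable def discPoly (S : Multiset K) (α β : K) : K[X] :=
  (rootsPoly S).comp (C β * X + C α)

lemma discPoly_eq_prod (S : Multiset K) (α β : K) :
    discPoly S α β = (S.map fun a ↦ C β * X + C (α - a)).prod := by
  rw [discPoly, rootsPoly, multiset_prod_comp, Multiset.map_map]
  refine congrArg Multiset.prod (Multiset.map_congr rfl fun a _ ↦ ?_)
  rw [Function.comp_apply, sub_comp, X_comp, C_comp, C_sub, add_sub_assoc]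

lemma discPoly_sum {ι : Type*} [Fintype ι] (cs : ι → Multiset K) (α β : K) :
    discPoly (∑ i, cs i) α β = ∏ i, discPoly (cs i) α β := by
  simp only [discPoly_eq_prod, ← Multiset.coe_mapAddMonoidHom, map_sum, Multiset.prod_sum]

lemma natDegree_discPoly (S : Multiset K) (α : K) {β : K} (hβ : β ≠ 0) :
    (discPoly S α β).natDegree = S.card := by
  rw [discPoly, rootsPoly, natDegree_comp, natDegree_multiset_prod_X_sub_C_eq_card,
    natDegree_linear hβ, mul_one]

lemma discPoly_mem_dominantLeadingCoeff {S : Multiset K} {α β : K} (hβ : β ≠ 0)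
    (hS : ∀ a ∈ S, v β ≤ v (α - a)) : discPoly S α β ∈ dominantLeadingCoeff v := by
  rw [discPoly_eq_prod]
  refine multiset_prod_mem _ fun f hf ↦ ?_
  obtain ⟨a, ha, rfl⟩ := Multiset.mem_map.1 hf
  exact C_mul_X_add_C_mem_dominantLeadingCoeff hβ (hS a ha)

lemma discPoly_comp_C_mul_X (S : Multiset K) (α β u : K) :
    (discPoly S α β).comp (C u * X) = discPoly S α (β * u) := by
  simp only [discPoly, comp_assoc, add_comp, mul_comp, C_comp, X_comp, C_mul, mul_assoc]

lemma discPoly_ne_zero (S : Multiset K) (α : K) {β : K} (hβ : β ≠ 0) : discPoly S α β ≠ 0 := by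
  rw [discPoly_eq_prod]
  refine Multiset.prod_ne_zero fun h ↦ ?_
  obtain ⟨a, -, ha⟩ := Multiset.mem_map.1 h
  exact hβ (by simpa using congrArg (coeff · 1) ha)

lemma TVal.isPartSquareDefect {S : Multiset K} {α β : K} {b t : ℚ} (h : TVal v S α b t)
    (hβ : v β = b) : IsPartSquareDefect v (discPoly S α β) t := by
  obtain ⟨β', hβ', hvβ', hlub⟩ := h
  have hu : v (β / β') = 0 := by
    rw [v.map_div, hβ, hvβ', ← WithTop.LinearOrderedAddCommGroup.coe_sub, sub_self,
      WithTop.coe_zero]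
  have hcomp : (discPoly S α β').comp (C (β / β') * X) = discPoly S α β := by
    rw [discPoly_comp_C_mul_X, mul_div_cancel₀ _ hβ']
  intro c
  rw [← hcomp, isSquareUpTo_comp_C_mul_X_iff hu]
  exact isPartSquareDefect_of_isLUB (discPoly_ne_zero S α hβ') hlub c

end DiscPoly

theorem stmt13_general {ι : Type*} [Fintype ι] [Nonempty ι] {cs : ι → Multiset K} {α : K} {d : ℚ}
    (heven : ∀ i, Even (cs i).card) (hd : ∀ i, ∀ a ∈ cs i, (d : WithTop ℚ) ≤ v (α - a))
    {t : ℚ} {ts : ι → ℚ} (ht : TVal v (∑ i, cs i) α d t) (hts : ∀ i, TVal v (cs i) α d (ts i)) :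
    (∃ i, ts i ≤ t ∧ (∀ j, ts i ≤ ts j) ∧ (ts i = t ∨ ∃ j, j ≠ i ∧ ts j = ts i)) ∧
      ((∀ i, (ts i : WithTop ℚ) = v 2 + v 2) → (t : WithTop ℚ) = v 2 + v 2) := by
  obtain ⟨β, hβ, hvβ, -⟩ := id ht
  have ht_prod : IsPartSquareDefect v (∏ i, discPoly (cs i) α β) t :=
    discPoly_sum cs α β ▸ ht.isPartSquareDefect hvβ
  have htwice := ht_prod.min_attained_twice
    (fun i ↦ natDegree_discPoly (cs i) α hβ ▸ heven i)
    (fun i ↦ discPoly_mem_dominantLeadingCoeff hβ fun a ha ↦ hvβ.trans_le (hd i a ha))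
    fun i ↦ (hts i).isPartSquareDefect hvβ
  refine ⟨htwice, fun hall ↦ ht_prod.le_val_two_add_val_two.antisymm ?_⟩
  obtain ⟨i, hit, -⟩ := htwice
  exact hall i ▸ WithTop.coe_le_coe.2 hit

end

/-- Let `𝔰` be a finite set of even cardinality `≥ 2`, `d` the minimum
of `v (a − a')` over distinct `a, a' ∈ 𝔰`, and suppose `𝔰` is the disjoint union of
nonempty even-cardinality subsets `c₁, …, c_N` (`N ≥ 2`) with `v (a − a') = d` for `a, a'`
in different parts.  Then for `α ∈ 𝔰`, the minimum of the `N + 1` quantities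
`𝔱^{cᵢ}(α,d)` and `𝔱^𝔰(α,d)` is attained at least twice; in particular if all
`𝔱^{cᵢ}(α,d) = 2 v 2` then also `𝔱^𝔰(α,d) = 2 v 2`. -/
theorem stmt13 {Kbar : Type*} [Field Kbar] [IsAlgClosed Kbar]
    (v : AddValuation Kbar (WithTop ℚ)) (hchar : (2 : Kbar) ≠ 0)
    (hres : ResidueAlgClosed v)
    (hsurj : ∀ b : ℚ, ∃ β : Kbar, β ≠ 0 ∧ v β = (b : WithTop ℚ))
    (𝔰 : Finset Kbar) (heven : Even 𝔰.card) (hcard : 2 ≤ 𝔰.card)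
    (d : ℚ)
    (hd_lb : ∀ a ∈ 𝔰, ∀ a' ∈ 𝔰, a ≠ a' → (d : WithTop ℚ) ≤ v (a - a'))
    (hd_att : ∃ a ∈ 𝔰, ∃ a' ∈ 𝔰, a ≠ a' ∧ v (a - a') = (d : WithTop ℚ))
    (N : ℕ) (hN : 2 ≤ N) (cs : Fin N → Finset Kbar)
    (hcs_ne : ∀ i, (cs i).Nonempty)
    (hcs_even : ∀ i, Even (cs i).card)
    (hpart : 𝔰.val = ∑ i, (cs i).val)
    (hcross : ∀ i j, i ≠ j → ∀ a ∈ cs i, ∀ a' ∈ cs j, v (a - a') = (d : WithTop ℚ))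
    (α : Kbar) (hα : α ∈ 𝔰) :
    ∀ (t : ℚ) (ts : Fin N → ℚ),
      TVal v 𝔰.val α d t → (∀ i, TVal v (cs i).val α d (ts i)) →
      (∃ i, ts i ≤ t ∧ (∀ j, ts i ≤ ts j) ∧
        (ts i = t ∨ ∃ j, j ≠ i ∧ ts j = ts i)) ∧
      ((∀ i, (ts i : WithTop ℚ) = v 2 + v 2) → (t : WithTop ℚ) = v 2 + v 2) := by
  intro t ts ht hts
  have : Nonempty (Fin N) := ⟨⟨0, by lia⟩⟩
  refine stmt13_general hcs_even (fun i a ha ↦ ?_) (hpart ▸ ht) hts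
  have ha_mem : a ∈ 𝔰 := by
    rw [← Finset.mem_val, hpart]
    exact Multiset.mem_sum.2 ⟨i, Finset.mem_univ i, ha⟩
  rcases eq_or_ne α a with rfl | hne
  · simp
  · exact hd_lb α hα a ha_mem hne
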